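/- Let n ≥ 2 be an integer and let Λ ⊂ ℝ² be a closed set that is 2-periodic with respect to the second variable. Let 2 ≤ k ≤ n−1 and define τ : Π^k(Λ) → ℂ by τ(ξ) = ∏_{p=2}^{k} ∏_{q=1}^{p−1} (e^{πiη_p} − e^{πiη_q})², where η_1 < ⋯ < η_k are the elements of Img(ξ). If ξ ∈ Π^{k*}_{ne}(Λ), then τ ∈ P^{Π^k(Λ),ξ}_2, i.e., there exist an open interval I containing ξ and φ ∈ L¹(ℝ) such that φ̂ = τ on I ∩ Π^k(Λ). -/

import Mathlib

open MeasureTheory Complex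

/-- Fourier transform with the convention `f̂(ξ) = ∫ e^{πixξ} f(x) dx`. -/
noncomputable def FT (f : ℝ → ℂ) (ξ : ℝ) : ℂ :=
  ∫ x : ℝ, Complex.exp (Real.pi * Complex.I * x * ξ) * f x

/-- `e^{πiη}`. -/
noncomputable def cexpEta (η : ℝ) : ℂ := Complex.exp (Real.pi * Complex.I * η)

/-- `Λ` is 2-periodic with respect to the second variable. -/
def Periodic2 (Λ : Set (ℝ × ℝ)) : Prop :=
  ∀ ξ η : ℝ, (ξ, η) ∈ Λ ↔ (ξ, η + 2) ∈ Λ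

/-- The projection `Π(Λ)` of `Λ` on the x-axis. -/
def proj (Λ : Set (ℝ × ℝ)) : Set ℝ := {ξ | ∃ η : ℝ, (ξ, η) ∈ Λ}

/-- `Img(ξ) = {η ∈ [0,2) : (ξ,η) ∈ Λ}`. -/
def Img (Λ : Set (ℝ × ℝ)) (ξ : ℝ) : Set ℝ := {η | η ∈ Set.Ico (0 : ℝ) 2 ∧ (ξ, η) ∈ Λ}

/-- `Π^k(Λ)` for `k < n`: points of `Π(Λ)` whose `Img` has exactly `k` elements. -/
def projExact (Λ : Set (ℝ × ℝ)) (k : ℕ) : Set ℝ :=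
  {ξ | ξ ∈ proj Λ ∧ (Img Λ ξ).encard = k}

/-- `Π^n(Λ)`: points of `Π(Λ)` whose `Img` has at least `n` elements. -/
def projAtLeast (Λ : Set (ℝ × ℝ)) (n : ℕ) : Set ℝ :=
  {ξ | ξ ∈ proj Λ ∧ (n : ℕ∞) ≤ (Img Λ ξ).encard}

/-- `ψ ∈ P^{E,ξ}_l` : there are an open interval `I ∋ ξ` and `φ_1,…,φ_{l-1} ∈ L¹(ℝ)` with
`φ̂_1 + φ̂_2 ψ + ⋯ + φ̂_{l-1} ψ^{l-2} + ψ^{l-1} = 0` on `I ∩ E`. -/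
def Pmem (E : Set ℝ) (ξ : ℝ) (l : ℕ) (ψ : ℝ → ℂ) : Prop :=
  ∃ a b : ℝ, ξ ∈ Set.Ioo a b ∧
    ∃ φ : Fin (l - 1) → ℝ → ℂ, (∀ i, Integrable (φ i)) ∧
      ∀ x ∈ Set.Ioo a b ∩ E,
        (∑ i : Fin (l - 1), FT (φ i) x * ψ x ^ (i : ℕ)) + ψ x ^ (l - 1) = 0

/-- `Π^{1*}(Λ)`: those `ξ ∈ Π^1(Λ)` such that `χ ∈ P^{Π^1(Λ),ξ}_n`, where
`χ(ξ') = e^{πiη}` with `η` the unique element of `Img(ξ')`. -/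
def projOneStar (Λ : Set (ℝ × ℝ)) (n : ℕ) : Set ℝ :=
  {ξ | ξ ∈ projExact Λ 1 ∧ ∃ χ : ℝ → ℂ,
    (∀ ξ' ∈ projExact Λ 1, ∀ η ∈ Img Λ ξ', χ ξ' = cexpEta η) ∧
    Pmem (projExact Λ 1) ξ n χ}

/-- `Π^{k*}_{su}(Λ)`. -/
def projStarSu (Λ : Set (ℝ × ℝ)) (n k : ℕ) : Set ℝ :=
  {ξ | ξ ∈ projExact Λ k ∧ ∃ a b : ℝ, ξ ∈ Set.Ioo a b ∧
    ∃ φ : Fin (n - 1) → ℝ → ℂ, (∀ i, Integrable (φ i)) ∧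
      ∀ ξ' ∈ Set.Ioo a b ∩ projExact Λ k, ∀ η ∈ Img Λ ξ',
        (∑ i : Fin (n - 1), FT (φ i) ξ' * cexpEta η ^ (i : ℕ)) = -(cexpEta η ^ (n - 1))}

/-- `Π^{k*}_{ne}(Λ)` for `k ≥ 2`. -/
def projStarNe (Λ : Set (ℝ × ℝ)) (k : ℕ) : Set ℝ :=
  {ξ | ξ ∈ projExact Λ k ∧ ∃ a b : ℝ, ξ ∈ Set.Ioo a b ∧
    ∃ φ : Fin k → ℝ → ℂ, (∀ i, Integrable (φ i)) ∧
      ∀ ξ' ∈ Set.Ioo a b ∩ projExact Λ k, ∀ η ∈ Img Λ ξ',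
        (∑ i : Fin k, FT (φ i) ξ' * cexpEta η ^ (i : ℕ)) = -(cexpEta η ^ k)}

/-- `(Γ, Λ)` with `Γ = ℝ × {0,…,n-1}` is a Heisenberg uniqueness pair: every admissible
measure `μ = Σ_m (x ↦ (x,m))_*(f_m dx)` (with each `f_m ∈ L¹(ℝ)`) whose Fourier transform
`μ̂(ξ,η) = Σ_m e^{mπiη} f̂_m(ξ)` vanishes on `Λ` must be zero, i.e. each `f_m = 0` a.e. -/
def IsHUP (n : ℕ) (Λ : Set (ℝ × ℝ)) : Prop :=
  ∀ f : Fin n → ℝ → ℂ, (∀ m, Integrable (f m)) →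
    (∀ ξ η : ℝ, (ξ, η) ∈ Λ → ∑ m : Fin n, cexpEta η ^ (m : ℕ) * FT (f m) ξ = 0) →
    ∀ m, f m =ᵐ[volume] (0 : ℝ → ℂ)

/-- `τ` agrees on `Π^k(Λ)` with `ξ ↦ ∏_{q<p} (e^{πiη_p} - e^{πiη_q})²`, where
`η_1 < ⋯ < η_k` enumerate `Img(ξ)`. -/
def tauSpec (Λ : Set (ℝ × ℝ)) (k : ℕ) (τ : ℝ → ℂ) : Prop :=
  ∀ ξ' ∈ projExact Λ k, ∀ η : Fin k → ℝ, StrictMono η → Set.range η = Img Λ ξ' →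
    τ ξ' = ∏ p : Fin k, ∏ q : Fin k,
      if (q : ℕ) < (p : ℕ) then (cexpEta (η p) - cexpEta (η q)) ^ 2 else 1

open scoped FourierTransform in
lemma FT_eq (f : ℝ → ℂ) (ξ : ℝ) : FT f ξ = 𝓕 f (-ξ / 2) := by
  rw [Real.fourier_real_eq_integral_exp_smul, FT]
  congr 1
  ext v
  rw [smul_eq_mul]
  congr 2
  push_cast
  ring

lemma FT_mul_exists (f g : ℝ → ℂ) (hf : Integrable f) (hg : Integrable g) :
    ∃ h : ℝ → ℂ, Integrable h ∧ ∀ x, FT h x = FT f x * FT g x := by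
  refine ⟨_, hf.integrable_convolution (ContinuousLinearMap.mul ℂ ℂ) hg, fun x => ?_⟩
  rw [FT_eq, FT_eq, FT_eq]
  exact Real.fourier_mul_convolution_eq hf hg _

lemma FT_kernel_integrable (f : ℝ → ℂ) (hf : Integrable f) (ξ : ℝ) :
    Integrable (fun x : ℝ => Complex.exp (Real.pi * Complex.I * x * ξ) * f x) := by
  refine hf.bdd_mul (c := 1) (by fun_prop) (Filter.Eventually.of_forall fun x => ?_)
  rw [Complex.norm_exp]
  simp

lemma FT_add' (f g : ℝ → ℂ) (hf : Integrable f) (hg : Integrable g) (x : ℝ) :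
    FT (f + g) x = FT f x + FT g x := by
  unfold FT
  rw [← integral_add (FT_kernel_integrable f hf x) (FT_kernel_integrable g hg x)]
  simp [mul_add]

lemma FT_smul' (c : ℂ) (f : ℝ → ℂ) (x : ℝ) :
    FT (c • f) x = c * FT f x := by
  unfold FT
  rw [← integral_const_mul]
  congr 1
  ext v
  simp only [Pi.smul_apply, smul_eq_mul]
  ring

lemma FT_poly {k : ℕ} (ψ : Fin k → ℝ → ℂ) (hψ : ∀ i, Integrable (ψ i))
    (Q : MvPolynomial (Fin k) ℂ) :
    ∃ φ : ℝ → ℂ, Integrable φ ∧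
      ∀ x, FT φ x + MvPolynomial.constantCoeff Q = MvPolynomial.eval (fun i => FT (ψ i) x) Q := by
  induction Q using MvPolynomial.induction_on with
  | C a => exact ⟨0, integrable_zero _ _ _, fun x => by simp [FT]⟩
  | add p q hp hq =>
    obtain ⟨f, hf, hf'⟩ := hp
    obtain ⟨g, hg, hg'⟩ := hq
    refine ⟨f + g, hf.add hg, fun x => ?_⟩
    rw [FT_add' f g hf hg, map_add, map_add, ← hf', ← hg']
    ring
  | mul_X p i hp =>
    obtain ⟨f, hf, hf'⟩ := hp
    obtain ⟨h, hh, hh'⟩ := FT_mul_exists f (ψ i) hf (hψ i)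
    refine ⟨h + (MvPolynomial.constantCoeff p) • ψ i, hh.add ((hψ i).smul _), fun x => ?_⟩
    rw [FT_add' _ _ hh ((hψ i).smul _), FT_smul', hh', map_mul, map_mul, ← hf']
    simp
    ring

lemma cexpEta_inj {a b : ℝ} (ha : a ∈ Set.Ico (0 : ℝ) 2) (hb : b ∈ Set.Ico (0 : ℝ) 2)
    (h : cexpEta a = cexpEta b) : a = b := by
  unfold cexpEta at h
  rw [Complex.exp_eq_exp_iff_exists_int] at h
  obtain ⟨m, hm⟩ := h
  have hpi : (Real.pi : ℂ) * Complex.I ≠ 0 := by simp [Real.pi_ne_zero]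
  have h1 : (Real.pi : ℂ) * Complex.I * a = (Real.pi : ℂ) * Complex.I * (b + 2 * m) := by
    rw [hm]; ring
  have h2 : (a : ℂ) = b + 2 * m := mul_left_cancel₀ hpi h1
  have h3 : a = b + 2 * m := by exact_mod_cast h2
  have h4 : m < 1 := by
    have : (m : ℝ) < 1 := by linarith [ha.1, ha.2, hb.1, hb.2]
    exact_mod_cast this
  have h5 : -1 < m := by
    have : (-1 : ℝ) < m := by linarith [ha.1, ha.2, hb.1, hb.2]
    exact_mod_cast this
  have : m = 0 := by omega
  simpa [this] using h3

lemma vander_eq {k : ℕ} (r : Fin k → ℂ) :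
    (∏ p : Fin k, ∏ q : Fin k, if (q : ℕ) < (p : ℕ) then (r p - r q) ^ 2 else 1)
      = (Matrix.vandermonde r).det ^ 2 := by
  rw [Matrix.det_vandermonde, Finset.prod_comm, ← Finset.prod_pow]
  refine Finset.prod_congr rfl fun i _ => ?_
  rw [← Finset.prod_pow, ← Finset.prod_filter]
  refine Finset.prod_congr ?_ fun _ _ => rfl
  ext j
  simp

lemma discr_poly (k : ℕ) (hk : 2 ≤ k) : ∃ Q : MvPolynomial (Fin k) ℂ,
    MvPolynomial.constantCoeff Q = 0 ∧ ∀ r : Fin k → ℂ,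
      MvPolynomial.eval (fun i : Fin k => (Finset.univ.val.map r).esymm (i + 1)) Q
        = (Matrix.vandermonde r).det ^ 2 := by
  let D : MvPolynomial (Fin k) ℂ :=
    (Matrix.vandermonde (fun i : Fin k => (MvPolynomial.X i : MvPolynomial (Fin k) ℂ))).det ^ 2
  have hD : D.IsSymmetric := by
    intro e
    have h1 : (MvPolynomial.rename e)
        (Matrix.vandermonde (fun i : Fin k => (MvPolynomial.X i : MvPolynomial (Fin k) ℂ))).det
        = ((Matrix.vandermonde
          (fun i : Fin k => (MvPolynomial.X i : MvPolynomial (Fin k) ℂ))).submatrix e id).det := by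
      rw [AlgHom.map_det]
      congr 1
      ext i j
      simp [Matrix.vandermonde_apply]
    simp only [D]
    rw [map_pow, h1, Matrix.det_permute, mul_pow]
    rcases Int.units_eq_one_or (Equiv.Perm.sign e) with h | h <;> simp [h]
  obtain ⟨Q, hQ⟩ := MvPolynomial.esymmAlgHom_surjective (σ := Fin k) (n := k) ℂ (by simp) ⟨D, hD⟩
  have hQ' := congrArg Subtype.val hQ
  rw [MvPolynomial.esymmAlgHom_apply] at hQ'
  have key : ∀ r : Fin k → ℂ,
      MvPolynomial.eval (fun i : Fin k => (Finset.univ.val.map r).esymm (i + 1)) Q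
        = (Matrix.vandermonde r).det ^ 2 := by
    intro r
    have h := congrArg (MvPolynomial.aeval r) hQ'
    have hl : MvPolynomial.aeval r
        (MvPolynomial.aeval (fun i : Fin k => MvPolynomial.esymm (Fin k) ℂ (i + 1)) Q)
        = MvPolynomial.eval (fun i : Fin k => (Finset.univ.val.map r).esymm (i + 1)) Q := by
      rw [← AlgHom.comp_apply, MvPolynomial.comp_aeval]
      simp only [MvPolynomial.aeval_esymm_eq_multiset_esymm]
      rfl
    rw [← hl, h]
    simp only [D]
    rw [map_pow, AlgHom.map_det]
    congr 2
    ext i j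
    simp [Matrix.vandermonde_apply]
  refine ⟨Q, ?_, key⟩
  have h0 := key (fun _ => 0)
  have h1 : (Matrix.vandermonde (fun _ : Fin k => (0 : ℂ))).det = 0 := by
    refine Matrix.det_zero_of_row_eq (i := ⟨0, by omega⟩) (j := ⟨1, by omega⟩) (by simp) ?_
    ext j
    simp [Matrix.vandermonde_apply]
  have h2 : (fun i : Fin k => (Finset.univ.val.map (fun _ : Fin k => (0 : ℂ))).esymm (i + 1))
      = 0 := by
    ext i
    rw [Finset.esymm_map_val]
    refine Finset.sum_eq_zero fun t ht => ?_
    rw [Finset.prod_const, (Finset.mem_powersetCard.1 ht).2]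
    simp
  rw [h1, h2] at h0
  rw [← MvPolynomial.eval_zero]
  simpa using h0

lemma vieta_aux {k : ℕ} (r : Fin k → ℂ) (hr : Function.Injective r) (c : Fin k → ℂ)
    (h : ∀ j, ∑ i : Fin k, c i * r j ^ (i : ℕ) = -(r j ^ k)) (i : Fin k) :
    (Finset.univ.val.map r).esymm (i + 1) = (-1) ^ ((i : ℕ) + 1) * c i.rev := by
  classical
  let P : Polynomial ℂ := ∑ i : Fin k, Polynomial.C (c i) * Polynomial.X ^ (i : ℕ)
  let R : Polynomial ℂ := ∏ j : Fin k, (Polynomial.X - Polynomial.C (r j))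
  have hP : P.degree < k := by
    refine (Polynomial.degree_sum_le _ _).trans_lt ?_
    rw [Finset.sup_lt_iff (WithBot.bot_lt_coe _)]
    intro b _
    refine (Polynomial.degree_C_mul_X_pow_le _ _).trans_lt ?_
    exact_mod_cast b.2
  have hRm : R.Monic := Polynomial.monic_prod_of_monic _ _ fun j _ => Polynomial.monic_X_sub_C _
  have hRd : R.degree = k := by
    simp [R, Polynomial.degree_prod]
  have hlt : (R - Polynomial.X ^ k - P).degree < ((Finset.univ : Finset (Fin k)).card : WithBot ℕ) := by
    rw [Finset.card_fin]
    refine (Polynomial.degree_sub_le _ _).trans_lt (max_lt ?_ hP)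
    rw [← hRd]
    refine Polynomial.degree_sub_lt ?_ hRm.ne_zero ?_
    · rw [hRd, Polynomial.degree_X_pow]
    · rw [hRm.leadingCoeff, (Polynomial.monic_X_pow k).leadingCoeff]
  have hz := Polynomial.eq_zero_of_degree_lt_of_eval_index_eq_zero (v := r)
    Finset.univ hr.injOn hlt (by
      intro j _
      have e1 : R.eval (r j) = 0 := by
        simp only [R]
        rw [Polynomial.eval_prod]
        exact Finset.prod_eq_zero (Finset.mem_univ j) (by simp)
      have e2 : P.eval (r j) = -(r j ^ k) := by
        rw [← h j]
        simp [P, Polynomial.eval_finsetSum]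
      simp [e1, e2])
  have hR : R = Polynomial.X ^ k + P := by
    linear_combination hz
  have hc := congrArg (fun p => Polynomial.coeff p (i.rev : ℕ)) hR
  have hi := i.2
  have hrev : (i.rev : ℕ) = k - (i + 1) := Fin.val_rev i
  have hPc : P.coeff (i.rev : ℕ) = c i.rev := by
    simp only [P, Polynomial.finsetSum_coeff, Polynomial.coeff_C_mul_X_pow, Fin.val_inj]
    simp
  have hXc : (Polynomial.X ^ k : Polynomial ℂ).coeff (i.rev : ℕ) = 0 := by
    rw [Polynomial.coeff_X_pow, if_neg (by omega)]
  have hv := Multiset.prod_X_sub_C_coeff (Finset.univ.val.map r) (k := (i.rev : ℕ))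
    (by simp)
  have hRc : R.coeff (i.rev : ℕ)
      = (-1) ^ ((i : ℕ) + 1) * (Finset.univ.val.map r).esymm (i + 1) := by
    have hcard : Multiset.card (Finset.univ.val.map r) - (i.rev : ℕ) = (i : ℕ) + 1 := by
      simp only [Multiset.card_map, Finset.card_val, Finset.card_fin]
      omega
    rw [hcard] at hv
    rw [← hv, Multiset.map_map]
    rfl
  simp only [Polynomial.coeff_add, hPc, hXc, hRc, zero_add] at hc
  rw [← hc, ← mul_assoc, ← mul_pow]
  simp

theorem tau_in_P2 (n : ℕ) (hn : 2 ≤ n) (Λ : Set (ℝ × ℝ))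
    (hclosed : IsClosed Λ) (hper : Periodic2 Λ)
    (k : ℕ) (hk2 : 2 ≤ k) (hkn : k ≤ n - 1)
    (τ : ℝ → ℂ) (hτ : tauSpec Λ k τ) (ξ : ℝ) (hξ : ξ ∈ projStarNe Λ k) :
    ∃ a b : ℝ, ξ ∈ Set.Ioo a b ∧ ∃ φ : ℝ → ℂ, MeasureTheory.Integrable φ ∧
      ∀ x ∈ Set.Ioo a b ∩ projExact Λ k, FT φ x = τ x := by
  obtain ⟨-, a, b, hab, φ, hφ, h⟩ := hξ
  obtain ⟨Q, hQ0, hQ⟩ := discr_poly k hk2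
  obtain ⟨f, hf, hf'⟩ := FT_poly (fun i : Fin k => ((-1 : ℂ) ^ ((i : ℕ) + 1)) • φ i.rev)
    (fun i => (hφ _).smul _) Q
  refine ⟨a, b, hab, f, hf, fun x hx => ?_⟩
  have hcard : (Img Λ x).encard = k := hx.2.2
  have hfin : (Img Λ x).Finite := Set.finite_of_encard_eq_coe hcard
  have hfc : hfin.toFinset.card = k := by
    rw [hfin.encard_eq_coe_toFinset_card] at hcard
    exact_mod_cast hcard
  let η : Fin k → ℝ := hfin.toFinset.orderEmbOfFin hfc
  have hη : StrictMono η := (hfin.toFinset.orderEmbOfFin hfc).strictMono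
  have hrange : Set.range η = Img Λ x := by
    simp [η, Finset.range_orderEmbOfFin]
  have hmem : ∀ j, η j ∈ Img Λ x := fun j => hrange ▸ Set.mem_range_self j
  have hinj : Function.Injective (fun j => cexpEta (η j)) := fun i j hij =>
    hη.injective (cexpEta_inj (hmem i).1 (hmem j).1 hij)
  rw [hτ x hx.2 η hη hrange, vander_eq (fun j => cexpEta (η j)), ← hQ]
  have := hf' x
  rw [hQ0, add_zero] at this
  rw [this]
  congr 2
  ext i
  rw [vieta_aux _ hinj (fun i => FT (φ i) x) (fun j => h x hx (η j) (hmem j)) i, FT_smul']
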